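/- arXiv:2102.10346 — 2 statements merged into one kernel-verified Lean document; each statement's English description precedes it below -/
import Mathlib

section
/- Let p ∈ [0, 1] and let {S_t}_{t∈ℕ} be a real-valued martingale adapted to a filtration {F_t}_{t∈ℕ} with S_0 = 0 and E[|S_t|^{1+p}] < ∞ for every t, and set X_i = S_i − S_{i−1}. Then E[|S_t|^{1+p}] ≤ 2^{1−p} Σ_{i=1}^{t} E[|X_i|^{1+p}]. -/
open MeasureTheory Filter

/-!
The function `x ↦ |x| ^ (1 + p)` has derivative `(1 + p) * φ x` with `φ x = sign x * |x| ^ p`, and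
`φ` is `p`-Hölder with constant `2 ^ (1 - p)`; this constant comes from points of opposite sign,
where concavity of `u ↦ u ^ p` is used. Integrating the Hölder bound gives the pointwise inequality
`|x + y| ^ (1 + p) ≤ |x| ^ (1 + p) + (1 + p) * (φ x * y) + 2 ^ (1 - p) * |y| ^ (1 + p)`.
With `x = S t` and `y` the next martingale increment the middle term has mean zero, so each step
adds at most `2 ^ (1 - p)` times the moment of its increment.
-/

/-- The odd extension `sign x * |x| ^ p` of the power function `x ↦ x ^ p`; for `0 < p` it is, up to
the factor `1 + p`, the derivative of `|x| ^ (1 + p)`. Written as a product with `x`, it vanishes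
at `x = 0` for every `p`, including `p = 0`. -/
noncomputable def oddRpow (p x : ℝ) : ℝ := |x| ^ (p - 1) * x

section OddRpow

variable {p : ℝ}

lemma oddRpow_neg (x : ℝ) : oddRpow p (-x) = -oddRpow p x := by simp [oddRpow]

lemma oddRpow_of_pos {x : ℝ} (hx : 0 < x) : oddRpow p x = x ^ p := by
  rw [oddRpow, abs_of_pos hx, ← Real.rpow_add_one hx.ne', sub_add_cancel]

lemma oddRpow_of_nonneg {x : ℝ} (hp : p ≠ 0) (hx : 0 ≤ x) : oddRpow p x = x ^ p := by
  rcases hx.eq_or_lt with rfl | hx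
  · simp [oddRpow, Real.zero_rpow hp]
  · exact oddRpow_of_pos hx

lemma oddRpow_of_nonpos {x : ℝ} (hp : p ≠ 0) (hx : x ≤ 0) : oddRpow p x = -(-x) ^ p := by
  rw [← oddRpow_of_nonneg hp (neg_nonneg.mpr hx), oddRpow_neg, neg_neg]

lemma abs_oddRpow_le (x : ℝ) : |oddRpow p x| ≤ |x| ^ p := by
  rcases eq_or_ne x 0 with rfl | hx
  · simp only [oddRpow, mul_zero, abs_zero]
    positivity
  · rw [← oddRpow_of_pos (abs_pos.mpr hx), oddRpow, oddRpow, abs_mul, abs_abs,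
      abs_of_nonneg (Real.rpow_nonneg (abs_nonneg x) _)]

lemma measurable_oddRpow : Measurable (oddRpow p) := by
  unfold oddRpow
  fun_prop

lemma hasDerivAt_abs_rpow_one_add (hp : 0 < p) (x : ℝ) :
    HasDerivAt (fun y : ℝ => |y| ^ (1 + p)) ((1 + p) * oddRpow p x) x := by
  convert hasDerivAt_abs_rpow x (p := 1 + p) (by linarith) using 1
  rw [oddRpow, mul_assoc, show 1 + p - 2 = p - 1 by ring]

lemma rpow_add_rpow_le_two_rpow_mul_add_rpow {a b : ℝ} (hp : 0 ≤ p) (hp1 : p ≤ 1)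
    (ha : 0 ≤ a) (hb : 0 ≤ b) : a ^ p + b ^ p ≤ 2 ^ (1 - p) * (a + b) ^ p := by
  have midpoint : 1 / 2 * a ^ p + 1 / 2 * b ^ p ≤ (1 / 2 * a + 1 / 2 * b) ^ p :=
    (Real.concaveOn_rpow hp hp1).2 ha hb (by norm_num) (by norm_num) (by norm_num)
  calc a ^ p + b ^ p = 2 * (1 / 2 * a ^ p + 1 / 2 * b ^ p) := by ring
    _ ≤ 2 * (1 / 2 * a + 1 / 2 * b) ^ p := by gcongr
    _ = 2 * ((a + b) / 2) ^ p := by ring_nf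
    _ = 2 ^ (1 - p) * (a + b) ^ p := by
      rw [Real.div_rpow (by positivity) zero_le_two, Real.rpow_sub two_pos, Real.rpow_one]
      ring

lemma oddRpow_sub_oddRpow_le {x y : ℝ} (hp : 0 < p) (hp1 : p ≤ 1) (hxy : x ≤ y) :
    oddRpow p y - oddRpow p x ≤ 2 ^ (1 - p) * (y - x) ^ p := by
  have hs : 0 ≤ y - x := sub_nonneg.mpr hxy
  have weaken : (y - x) ^ p ≤ 2 ^ (1 - p) * (y - x) ^ p :=
    le_mul_of_one_le_left (by positivity) (Real.one_le_rpow one_le_two (by linarith))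
  rcases le_total 0 x with hx | hx
  · have subadd : y ^ p ≤ x ^ p + (y - x) ^ p := by
      simpa only [add_sub_cancel] using Real.rpow_add_le_add_rpow hx hs hp.le hp1
    rw [oddRpow_of_nonneg hp.ne' hx, oddRpow_of_nonneg hp.ne' (hx.trans hxy)]
    linarith
  rcases le_total 0 y with hy | hy
  · have concave : y ^ p + (-x) ^ p ≤ 2 ^ (1 - p) * (y - x) ^ p :=
      rpow_add_rpow_le_two_rpow_mul_add_rpow hp.le hp1 hy (neg_nonneg.mpr hx)
    rw [oddRpow_of_nonneg hp.ne' hy, oddRpow_of_nonpos hp.ne' hx]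
    linarith
  · have subadd : (-x) ^ p ≤ (-y) ^ p + (y - x) ^ p := by
      simpa only [neg_add_eq_sub, sub_sub_cancel_left] using
        Real.rpow_add_le_add_rpow (neg_nonneg.mpr hy) hs hp.le hp1
    rw [oddRpow_of_nonpos hp.ne' hx, oddRpow_of_nonpos hp.ne' hy]
    linarith

lemma abs_add_rpow_one_add_le_of_nonneg {y : ℝ} (hp : 0 < p) (hp1 : p ≤ 1) (x : ℝ) (hy : 0 ≤ y) :
    |x + y| ^ (1 + p) ≤
      |x| ^ (1 + p) + (1 + p) * (oddRpow p x * y) + 2 ^ (1 - p) * |y| ^ (1 + p) := by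
  let gap : ℝ → ℝ := fun s =>
    |x + s| ^ (1 + p) - (1 + p) * (oddRpow p x * s) - 2 ^ (1 - p) * |s| ^ (1 + p)
  have gap_deriv (s : ℝ) : HasDerivAt gap ((1 + p) * oddRpow p (x + s)
      - (1 + p) * (oddRpow p x * 1) - 2 ^ (1 - p) * ((1 + p) * oddRpow p s)) s :=
    ((HasDerivAt.comp_const_add x s (hasDerivAt_abs_rpow_one_add hp (x + s))).sub
      (((hasDerivAt_id s).const_mul _).const_mul _)).sub
      ((hasDerivAt_abs_rpow_one_add hp s).const_mul _)
  have gap_antitone : AntitoneOn gap (Set.Ici 0) := by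
    refine antitoneOn_of_hasDerivWithinAt_nonpos (convex_Ici 0)
      (fun s _ => (gap_deriv s).continuousAt.continuousWithinAt)
      (fun s _ => (gap_deriv s).hasDerivWithinAt) fun s hs => ?_
    rw [interior_Ici] at hs
    have holder := oddRpow_sub_oddRpow_le hp hp1 (le_add_of_nonneg_right hs.le : x ≤ x + s)
    rw [add_sub_cancel_left, ← oddRpow_of_pos hs] at holder
    linarith [mul_le_mul_of_nonneg_left holder (by linarith : 0 ≤ 1 + p)]
  have gap_zero : gap 0 = |x| ^ (1 + p) := by
    simp [gap, Real.zero_rpow (by linarith : 1 + p ≠ 0)]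
  have gap_le : gap y ≤ gap 0 := gap_antitone Set.self_mem_Ici hy hy
  simp only [gap_zero, gap] at gap_le
  linarith

lemma abs_add_rpow_one_add_le (hp : 0 ≤ p) (hp1 : p ≤ 1) (x y : ℝ) :
    |x + y| ^ (1 + p) ≤
      |x| ^ (1 + p) + (1 + p) * (oddRpow p x * y) + 2 ^ (1 - p) * |y| ^ (1 + p) := by
  rcases hp.eq_or_lt with rfl | hp
  · have sign_le : |oddRpow 0 x| ≤ 1 := by simpa using abs_oddRpow_le (p := 0) x
    have mul_le : |oddRpow 0 x * y| ≤ |y| := by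
      rw [abs_mul]
      exact mul_le_of_le_one_left (abs_nonneg y) sign_le
    simp only [add_zero, Real.rpow_one, sub_zero, one_mul]
    linarith [abs_add_le x y, neg_abs_le (oddRpow 0 x * y)]
  · rcases le_total 0 y with hy | hy
    · exact abs_add_rpow_one_add_le_of_nonneg hp hp1 x hy
    · have := abs_add_rpow_one_add_le_of_nonneg hp hp1 (-x) (neg_nonneg.mpr hy)
      rwa [← neg_add, abs_neg, abs_neg, abs_neg, oddRpow_neg, neg_mul_neg] at this

lemma abs_oddRpow_mul_le (hp : 0 ≤ p) (x y : ℝ) :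
    |oddRpow p x * y| ≤ |x| ^ (1 + p) + |y| ^ (1 + p) := by
  have hp' : 1 + p ≠ 0 := by linarith
  calc |oddRpow p x * y| = |y| * |oddRpow p x| := by rw [abs_mul, mul_comm]
    _ ≤ |y| * |x| ^ p := by gcongr; exact abs_oddRpow_le x
    _ ≤ max |x| |y| * max |x| |y| ^ p := by
      gcongr
      exacts [le_max_right _ _, le_max_left _ _]
    _ = max |x| |y| ^ (1 + p) := (Real.rpow_one_add' (by positivity) hp').symm
    _ ≤ |x| ^ (1 + p) + |y| ^ (1 + p) := by
      rcases max_choice |x| |y| with h | h <;> rw [h]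
      · exact le_add_of_nonneg_right (by positivity)
      · exact le_add_of_nonneg_left (by positivity)

end OddRpow

section ConditionalExpectation

variable {Ω : Type*} {m m0 : MeasurableSpace Ω} {μ : Measure Ω}

lemma integrable_norm_sub_rpow {E : Type*} [NormedAddCommGroup E] {f g : Ω → E} {q : ℝ}
    (hq : 0 < q) (hf : AEStronglyMeasurable f μ) (hg : AEStronglyMeasurable g μ)
    (hfq : Integrable (fun ω => ‖f ω‖ ^ q) μ) (hgq : Integrable (fun ω => ‖g ω‖ ^ q) μ) :
    Integrable (fun ω => ‖f ω - g ω‖ ^ q) μ := by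
  have memLp_iff {h : Ω → E} (hh : AEStronglyMeasurable h μ) :
      Integrable (fun ω => ‖h ω‖ ^ q) μ ↔ MemLp h (ENNReal.ofReal q) μ := by
    simpa only [ENNReal.toReal_ofReal hq.le] using
      integrable_norm_rpow_iff hh (ENNReal.ofReal_pos.mpr hq).ne' ENNReal.ofReal_ne_top
  exact (memLp_iff (hf.sub hg)).mpr (((memLp_iff hf).mp hfq).sub ((memLp_iff hg).mp hgq))

lemma integral_mul_eq_zero_of_condExp_ae_eq_zero {f g : Ω → ℝ} (hm : m ≤ m0)
    [SigmaFinite (μ.trim hm)] (hf : StronglyMeasurable[m] f) (hg : Integrable g μ)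
    (hfg : Integrable (f * g) μ) (hg0 : μ[g | m] =ᵐ[μ] 0) : ∫ ω, f ω * g ω ∂μ = 0 := by
  have pull_out : μ[f * g | m] =ᵐ[μ] 0 := by
    filter_upwards [condExp_mul_of_stronglyMeasurable_left hf hfg hg, hg0] with ω hmul hzero
    simp [hmul, hzero]
  calc ∫ ω, f ω * g ω ∂μ = ∫ ω, (μ[f * g | m]) ω ∂μ := (integral_condExp hm).symm
    _ = 0 := by simp [integral_congr_ae pull_out]

lemma integral_abs_add_rpow_one_add_le {p : ℝ} (hp : 0 ≤ p) (hp1 : p ≤ 1) {x y : Ω → ℝ}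
    (hm : m ≤ m0) [SigmaFinite (μ.trim hm)] (hx : StronglyMeasurable[m] x) (hy : Integrable y μ)
    (hxp : Integrable (fun ω => |x ω| ^ (1 + p)) μ) (hyp : Integrable (fun ω => |y ω| ^ (1 + p)) μ)
    (hy0 : μ[y | m] =ᵐ[μ] 0) :
    ∫ ω, |x ω + y ω| ^ (1 + p) ∂μ ≤
      ∫ ω, |x ω| ^ (1 + p) ∂μ + 2 ^ (1 - p) * ∫ ω, |y ω| ^ (1 + p) ∂μ := by
  have odd_meas : StronglyMeasurable[m] fun ω => oddRpow p (x ω) :=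
    (measurable_oddRpow.comp hx.measurable).stronglyMeasurable
  have odd_mul_int : Integrable (fun ω => oddRpow p (x ω) * y ω) μ :=
    (hxp.add hyp).mono' ((odd_meas.mono hm).aestronglyMeasurable.mul hy.aestronglyMeasurable)
      (.of_forall fun ω => abs_oddRpow_mul_le hp (x ω) (y ω))
  have odd_mul_zero : ∫ ω, oddRpow p (x ω) * y ω ∂μ = 0 :=
    integral_mul_eq_zero_of_condExp_ae_eq_zero hm odd_meas hy odd_mul_int hy0
  have linear_int : Integrable (fun ω => |x ω| ^ (1 + p) + (1 + p) * (oddRpow p (x ω) * y ω)) μ :=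
    hxp.add (odd_mul_int.const_mul _)
  calc ∫ ω, |x ω + y ω| ^ (1 + p) ∂μ
      ≤ ∫ ω, (|x ω| ^ (1 + p) + (1 + p) * (oddRpow p (x ω) * y ω)
          + 2 ^ (1 - p) * |y ω| ^ (1 + p)) ∂μ :=
        integral_mono_of_nonneg (.of_forall fun ω => by positivity)
          (linear_int.add (hyp.const_mul _))
          (.of_forall fun ω => abs_add_rpow_one_add_le hp hp1 (x ω) (y ω))
    _ = ∫ ω, |x ω| ^ (1 + p) ∂μ + 2 ^ (1 - p) * ∫ ω, |y ω| ^ (1 + p) ∂μ := by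
        rw [integral_add linear_int (hyp.const_mul _), integral_add hxp (odd_mul_int.const_mul _),
          integral_const_mul, integral_const_mul, odd_mul_zero, mul_zero, add_zero]

end ConditionalExpectation

section Martingale

variable {Ω : Type*} {m0 : MeasurableSpace Ω} {μ : Measure Ω}

lemma condExp_martingale_sub_ae_eq_zero {ι E : Type*} [Preorder ι] [NormedAddCommGroup E]
    [NormedSpace ℝ E] [CompleteSpace E] {ℱ : Filtration ι m0} {S : ι → Ω → E}
    (hS : Martingale S ℱ μ) {i j : ι} (hij : i ≤ j) : μ[S j - S i | ℱ i] =ᵐ[μ] 0 := by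
  filter_upwards [condExp_sub (hS.integrable j) (hS.integrable i) (ℱ i), hS.condExp_ae_eq hij,
    hS.condExp_ae_eq (le_refl i)] with ω hsub hj hi
  simp [hsub, hj, hi]

theorem martingale_moment_bound_real_general {ℱ : Filtration ℕ m0} [SigmaFiniteFiltration μ ℱ]
    {p : ℝ} (hp : p ∈ Set.Icc (0 : ℝ) 1) {S : ℕ → Ω → ℝ} (hS : Martingale S ℱ μ)
    (hint : ∀ t, Integrable (fun ω => |S t ω| ^ (1 + p)) μ) (t : ℕ) :
    ∫ ω, |S t ω| ^ (1 + p) ∂μ ≤ ∫ ω, |S 0 ω| ^ (1 + p) ∂μ +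
      2 ^ (1 - p) * ∑ i ∈ Finset.range t, ∫ ω, |S (i + 1) ω - S i ω| ^ (1 + p) ∂μ := by
  obtain ⟨hp0, hp1⟩ := hp
  have increment_int (t : ℕ) : Integrable (fun ω => |S (t + 1) ω - S t ω| ^ (1 + p)) μ :=
    integrable_norm_sub_rpow (by linarith) (hS.integrable _).aestronglyMeasurable
      (hS.integrable _).aestronglyMeasurable (hint _) (hint _)
  have moment_succ (t : ℕ) : ∫ ω, |S (t + 1) ω| ^ (1 + p) ∂μ ≤
      ∫ ω, |S t ω| ^ (1 + p) ∂μ + 2 ^ (1 - p) * ∫ ω, |S (t + 1) ω - S t ω| ^ (1 + p) ∂μ := by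
    simpa using integral_abs_add_rpow_one_add_le hp0 hp1 (ℱ.le t) (hS.stronglyMeasurable t)
      ((hS.integrable (t + 1)).sub (hS.integrable t)) (hint t) (increment_int t)
      (condExp_martingale_sub_ae_eq_zero hS t.le_succ)
  induction t with
  | zero => simp
  | succ t ih =>
    rw [Finset.sum_range_succ, mul_add]
    linarith [moment_succ t]

end Martingale

/-- for `p ∈ [0,1]` and a real-valued martingale `{S_t}` with `S_0 = 0` and
`E[|S_t|^{1+p}] < ∞` for every `t`, setting `X_i = S_i − S_{i−1}`, one has
`E[|S_t|^{1+p}] ≤ 2^{1−p} Σ_{i=1}^t E[|X_i|^{1+p}]`. -/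
theorem martingale_moment_bound_real
    {Ω : Type} {m0 : MeasurableSpace Ω} {P : Measure Ω} [IsProbabilityMeasure P]
    (ℱ : Filtration ℕ m0) (p : ℝ) (hp : p ∈ Set.Icc (0 : ℝ) 1)
    (S : ℕ → Ω → ℝ) (hmart : Martingale S ℱ P) (hS0 : ∀ ω, S 0 ω = 0)
    (hint : ∀ t, Integrable (fun ω => |S t ω| ^ (1 + p)) P) (t : ℕ) :
    ∫ ω, |S t ω| ^ (1 + p) ∂P ≤
      2 ^ (1 - p) * ∑ i ∈ Finset.range t, ∫ ω, |S (i + 1) ω - S i ω| ^ (1 + p) ∂P := by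
  simpa [hS0, Real.zero_rpow (by linarith [hp.1] : 1 + p ≠ 0)] using
    martingale_moment_bound_real_general hp hmart hint t
end

section
/- Let p ∈ [1, 2]. Every non-empty set M of symmetric n×n matrices that is uniformly diagonally dominant with non-negative diagonal is uniformly p-PD. -/
open Matrix Finset

/-- The signed entrywise power `v^{⟨q⟩}`: `(v^{⟨q⟩})_i = sgn(v_i)|v_i|^q`. -/
noncomputable def signedPow {n : ℕ} (q : ℝ) (v : Fin n → ℝ) : Fin n → ℝ :=
  fun i => Real.sign (v i) * |v i| ^ q

/-- The `p`-norm `‖v‖_p = (Σ_i |v_i|^p)^{1/p}` on `ℝ^n`. -/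
noncomputable def pNorm {n : ℕ} (p : ℝ) (v : Fin n → ℝ) : ℝ :=
  (∑ i, |v i| ^ p) ^ (1 / p)

/-- `Q` is `p`-positive definite: `v⊤ Q v^{⟨p−1⟩} > 0` for every `v` with `‖v‖_p = 1`. -/
def PPosDef {n : ℕ} (p : ℝ) (Q : Matrix (Fin n) (Fin n) ℝ) : Prop :=
  ∀ v : Fin n → ℝ, pNorm p v = 1 → 0 < v ⬝ᵥ Q.mulVec (signedPow (p - 1) v)

/-- `M` is uniformly `p`-positive definite: every matrix in the closure of `M` is `p`-PD. -/
def UnifPPosDef {n : ℕ} (p : ℝ) (M : Set (Matrix (Fin n) (Fin n) ℝ)) : Prop :=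
  ∀ Q ∈ closure M, PPosDef p Q

/-- `M` is uniformly diagonally dominant with non-negative diagonal:
`inf_{Q ∈ M} min_i (q_{ii} − Σ_{j≠i}|q_{ij}|) > 0`. -/
def UnifDiagDom {n : ℕ} (M : Set (Matrix (Fin n) (Fin n) ℝ)) : Prop :=
  ∃ ε : ℝ, 0 < ε ∧ ∀ Q ∈ M, ∀ i, ε ≤ Q i i - ∑ j ∈ Finset.univ.erase i, |Q i j|

/-!
By Young's inequality, `|a| |b|^(p - 1) ≤ |a|^p / p + (1 - 1/p) |b|^p`, so each off-diagonal term
of `v⊤ Q v^{⟨p−1⟩}` costs at most a `1/p`-share of `|q_ij| |v_i|^p` and a `(1 - 1/p)`-share of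
`|q_ij| |v_j|^p`. Summing, `v⊤ Q v^{⟨p−1⟩}` is at least `Σ_i m_i |v_i|^p`, where `m_i` is `q_ii`
minus the correspondingly weighted absolute row and column sums. For symmetric `Q` both sums agree
and `m_i` is the usual diagonal dominance gap.
-/

section DominanceMargin

variable {ι : Type*} [Fintype ι] [DecidableEq ι]

/-- The amount by which the `i`-th diagonal entry of `Q` exceeds the convex combination, with
weights `θ` and `1 - θ`, of the off-diagonal absolute sums of row `i` and of column `i`. Positive
margins are a convex row-and-column form of diagonal dominance; `θ = 1` is dominance by rows. The
diagonal entry enters with its sign, so a positive margin with `θ ∈ [0, 1]` makes it positive. -/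
def dominanceMargin (θ : ℝ) (Q : Matrix ι ι ℝ) (i : ι) : ℝ :=
  Q i i - (θ * ∑ j ∈ univ.erase i, |Q i j| + (1 - θ) * ∑ j ∈ univ.erase i, |Q j i|)

lemma dominanceMargin_of_isSymm (θ : ℝ) {Q : Matrix ι ι ℝ} (hQ : Q.IsSymm) (i : ι) :
    dominanceMargin θ Q i = Q i i - ∑ j ∈ univ.erase i, |Q i j| := by
  simp only [dominanceMargin, fun j => hQ.apply i j]
  ring

lemma continuous_dominanceMargin (θ : ℝ) (i : ι) :
    Continuous fun Q : Matrix ι ι ℝ => dominanceMargin θ Q i := by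
  unfold dominanceMargin
  fun_prop

lemma sum_dominanceMargin_mul (θ : ℝ) (Q : Matrix ι ι ℝ) (x : ι → ℝ) :
    ∑ i, dominanceMargin θ Q i * x i =
      ∑ i, (Q i i * x i - ∑ j ∈ univ.erase i, |Q i j| * (θ * x i + (1 - θ) * x j)) := by
  have hswap : ∑ i, ∑ j ∈ univ.erase i, |Q j i| * x i = ∑ i, ∑ j ∈ univ.erase i, |Q i j| * x j :=
    sum_comm' fun i j => by simp [ne_comm]
  calc ∑ i, dominanceMargin θ Q i * x i
    _ = ∑ i, Q i i * x i - (θ * ∑ i, ∑ j ∈ univ.erase i, |Q i j| * x i +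
          (1 - θ) * ∑ i, ∑ j ∈ univ.erase i, |Q j i| * x i) := by
      simp only [dominanceMargin, sub_mul, add_mul, sum_sub_distrib, sum_add_distrib, mul_assoc,
        sum_mul, mul_sum]
    _ = ∑ i, (Q i i * x i - ∑ j ∈ univ.erase i, |Q i j| * (θ * x i + (1 - θ) * x j)) := by
      rw [hswap]
      simp only [sum_sub_distrib, sum_add_distrib, mul_add, mul_sum, mul_left_comm]

end DominanceMargin

lemma mul_rpow_sub_one_le {p a b : ℝ} (hp : 1 ≤ p) (ha : 0 ≤ a) (hb : 0 ≤ b) :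
    a * b ^ (p - 1) ≤ p⁻¹ * a ^ p + (1 - p⁻¹) * b ^ p := by
  have hp0 : p ≠ 0 := by positivity
  have hexp : p * (1 - p⁻¹) = p - 1 := by field_simp
  calc a * b ^ (p - 1)
    _ = (a ^ p) ^ p⁻¹ * (b ^ p) ^ (1 - p⁻¹) := by
      rw [Real.rpow_rpow_inv ha hp0, ← Real.rpow_mul hb, hexp]
    _ ≤ p⁻¹ * a ^ p + (1 - p⁻¹) * b ^ p :=
      Real.geom_mean_le_arith_mean2_weighted (by positivity)
        (sub_nonneg.mpr (inv_le_one_of_one_le₀ hp)) (by positivity) (by positivity)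
        (add_sub_cancel _ _)

lemma self_mul_real_sign (x : ℝ) : x * Real.sign x = |x| := by
  rcases lt_trichotomy x 0 with hx | rfl | hx
  · simp [Real.sign_of_neg hx, abs_of_neg hx]
  · simp
  · simp [Real.sign_of_pos hx, abs_of_pos hx]

section SignedPow

variable {n : ℕ}

lemma abs_signedPow_le (q : ℝ) (v : Fin n → ℝ) (i : Fin n) : |signedPow q v i| ≤ |v i| ^ q := by
  have hsign : |Real.sign (v i)| ≤ 1 := by
    rcases Real.sign_apply_eq (v i) with h | h | h <;> simp [h]
  have hpow : 0 ≤ |v i| ^ q := by positivity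
  rw [signedPow, abs_mul, abs_of_nonneg hpow]
  exact mul_le_of_le_one_left hpow hsign

lemma mul_signedPow_sub_one {p : ℝ} (hp : p ≠ 0) (v : Fin n → ℝ) (i : Fin n) :
    v i * signedPow (p - 1) v i = |v i| ^ p := by
  rw [signedPow, ← mul_assoc, self_mul_real_sign, ← Real.rpow_one_add' (abs_nonneg _) (by simpa),
    add_sub_cancel]

lemma abs_mul_signedPow_sub_one_le {p : ℝ} (hp : 1 ≤ p) (v : Fin n → ℝ) (i j : Fin n) :
    |v i * signedPow (p - 1) v j| ≤ p⁻¹ * |v i| ^ p + (1 - p⁻¹) * |v j| ^ p :=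
  calc |v i * signedPow (p - 1) v j|
    _ = |v i| * |signedPow (p - 1) v j| := abs_mul _ _
    _ ≤ |v i| * |v j| ^ (p - 1) := by gcongr; exact abs_signedPow_le _ v j
    _ ≤ p⁻¹ * |v i| ^ p + (1 - p⁻¹) * |v j| ^ p :=
      mul_rpow_sub_one_le hp (abs_nonneg _) (abs_nonneg _)

theorem sum_dominanceMargin_mul_le_dotProduct_mulVec {p : ℝ} (hp : 1 ≤ p)
    (Q : Matrix (Fin n) (Fin n) ℝ) (v : Fin n → ℝ) :
    ∑ i, dominanceMargin p⁻¹ Q i * |v i| ^ p ≤ v ⬝ᵥ Q *ᵥ signedPow (p - 1) v := by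
  have hdiag (i : Fin n) : v i * (Q i i * signedPow (p - 1) v i) = Q i i * |v i| ^ p := by
    rw [mul_left_comm, mul_signedPow_sub_one (by positivity)]
  have hoff (i j : Fin n) : -(|Q i j| * (p⁻¹ * |v i| ^ p + (1 - p⁻¹) * |v j| ^ p)) ≤
      v i * (Q i j * signedPow (p - 1) v j) := by
    refine neg_le_of_abs_le ?_
    rw [mul_left_comm, abs_mul]
    gcongr
    exact abs_mul_signedPow_sub_one_le hp v i j
  rw [sum_dominanceMargin_mul]
  simp only [dotProduct, mulVec, mul_sum]
  refine sum_le_sum fun i _ => ?_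
  rw [← add_sum_erase _ _ (mem_univ i), hdiag, sub_eq_add_neg, ← sum_neg_distrib]
  gcongr with j
  exact hoff i j

lemma exists_ne_zero_of_pNorm_eq_one {p : ℝ} (hp : p ≠ 0) {v : Fin n → ℝ} (hv : pNorm p v = 1) :
    ∃ i, v i ≠ 0 := by
  by_contra! h
  simp [pNorm, h, hp] at hv

theorem pPosDef_of_dominanceMargin_pos {p : ℝ} (hp : 1 ≤ p) {Q : Matrix (Fin n) (Fin n) ℝ}
    (hQ : ∀ i, 0 < dominanceMargin p⁻¹ Q i) : PPosDef p Q := by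
  intro v hv
  obtain ⟨i, hi⟩ := exists_ne_zero_of_pNorm_eq_one (by positivity) hv
  refine lt_of_lt_of_le ?_ (sum_dominanceMargin_mul_le_dotProduct_mulVec hp Q v)
  exact sum_pos' (fun j _ => mul_nonneg (hQ j).le (by positivity))
    ⟨i, mem_univ i, mul_pos (hQ i) (by positivity)⟩

end SignedPow

theorem unifDiagDom_unifPPosDef_general {n : ℕ} {p : ℝ} (hp : 1 ≤ p)
    {M : Set (Matrix (Fin n) (Fin n) ℝ)}
    (hdd : ∃ ε : ℝ, 0 < ε ∧ ∀ Q ∈ M, ∀ i, ε ≤ dominanceMargin p⁻¹ Q i) :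
    UnifPPosDef p M := by
  obtain ⟨ε, hε, hM⟩ := hdd
  refine fun Q hQ => pPosDef_of_dominanceMargin_pos hp fun i => hε.trans_le ?_
  exact le_on_closure (fun A hA => hM A hA i) continuousOn_const
    (continuous_dominanceMargin p⁻¹ i).continuousOn hQ

/-- for `p ∈ [1,2]`, every non-empty set of symmetric matrices that is
uniformly diagonally dominant with non-negative diagonal is uniformly `p`-PD. -/
theorem unifDiagDom_unifPPosDef {n : ℕ} (p : ℝ) (hp : p ∈ Set.Icc (1 : ℝ) 2)
    (M : Set (Matrix (Fin n) (Fin n) ℝ)) (hne : M.Nonempty)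
    (hsymm : ∀ Q ∈ M, Q.IsSymm) (hdd : UnifDiagDom M) :
    UnifPPosDef p M := by
  obtain ⟨ε, hε, hM⟩ := hdd
  exact unifDiagDom_unifPPosDef_general hp.1
    ⟨ε, hε, fun Q hQ i => (hM Q hQ i).trans_eq (dominanceMargin_of_isSymm _ (hsymm Q hQ) i).symm⟩
end
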